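/- arXiv:0911.4703 — 4 statements merged into one kernel-verified Lean document; each statement's English description precedes it below -/
import Mathlib

section
/- Assume ρ0⁺ > ρ0⁻ and σ k² < g(ρ0⁺ − ρ0⁻). Then there exists s₀ > 0, depending only on m, ℓ, g, σ, k and the profiles ρ0, p, ε0, δ0, such that μ(s) < 0 for all 0 < s ≤ s₀. In particular, for every 0 < s ≤ s₀ there exists an admissible pair (φ,ψ) with J(φ,ψ) = 1 and E(φ,ψ;s) < 0. -/
open Set MeasureTheory intervalIntegral Filter Topology

noncomputable section

namespace RT

/-- The piecewise integral `∫_{-m}^0 + ∫_0^ℓ`. -/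
def pwInt (m l : ℝ) (f : ℝ → ℝ) : ℝ :=
  (∫ x in (-m)..(0:ℝ), f x) + ∫ x in (0:ℝ)..l, f x

/-- `f` restricted to `[-m,0)` extends continuously to `[-m,0]`, and `f` restricted to
`(0,ℓ]` extends continuously to `[0,ℓ]`. -/
def PiecewiseCont (m l : ℝ) (f : ℝ → ℝ) : Prop :=
  (∃ F : ℝ → ℝ, ContinuousOn F (Icc (-m) 0) ∧ EqOn f F (Ico (-m) 0)) ∧
  (∃ F : ℝ → ℝ, ContinuousOn F (Icc 0 l) ∧ EqOn f F (Ioc 0 l))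

/-- A profile function: the restriction to `[-m,0)` extends continuously to `[-m,0]`, and
the function is continuous on `[0,ℓ]` (hence right-continuous at `0`). -/
def Profile (m l : ℝ) (f : ℝ → ℝ) : Prop :=
  (∃ F : ℝ → ℝ, ContinuousOn F (Icc (-m) 0) ∧ EqOn f F (Ico (-m) 0)) ∧
  ContinuousOn f (Icc 0 l)

/-- The four steady-state profiles `ρ0, p, ε0, δ0` with their positivity assumptions. -/
def ProfilesHyp (m l : ℝ) (ρ0 p ε0 δ0 : ℝ → ℝ) : Prop :=
  Profile m l ρ0 ∧ Profile m l p ∧ Profile m l ε0 ∧ Profile m l δ0 ∧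
  (∀ x ∈ Icc (-m) l, 0 < ρ0 x) ∧ (∀ x ∈ Icc (-m) l, 0 < p x) ∧
  (∀ x ∈ Icc (-m) l, 0 < ε0 x) ∧ (∀ x ∈ Icc (-m) l, 0 ≤ δ0 x)

/-- `f` is continuous on `[-m,ℓ]` and continuously differentiable on `[-m,0]` and on
`[0,ℓ]`, with piecewise derivative `fd`. -/
def PiecewiseC1 (m l : ℝ) (f fd : ℝ → ℝ) : Prop :=
  ContinuousOn f (Icc (-m) l) ∧
  (∀ x ∈ Ico (-m) 0, HasDerivWithinAt f (fd x) (Icc (-m) 0) x) ∧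
  (∀ x ∈ Ioc 0 l, HasDerivWithinAt f (fd x) (Icc 0 l) x) ∧
  PiecewiseCont m l fd

/-- An admissible pair `(φ,ψ)` with piecewise derivatives `(φd,ψd)`. -/
def Admissible (m l : ℝ) (φ ψ φd ψd : ℝ → ℝ) : Prop :=
  PiecewiseC1 m l φ φd ∧ PiecewiseC1 m l ψ ψd ∧
  φ (-m) = 0 ∧ φ l = 0 ∧ ψ (-m) = 0 ∧ ψ l = 0

/-- The energy `E(φ,ψ;s)`. -/
def energyE (m l g σ k : ℝ) (ρ0 p ε0 δ0 : ℝ → ℝ) (φ ψ φd ψd : ℝ → ℝ) (s : ℝ) : ℝ :=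
  σ * k ^ 2 / 2 * (ψ 0) ^ 2
  + (1 / 2) * pwInt m l (fun x =>
      (s * δ0 x + p x * ρ0 x) * (ψd x + k * φ x) ^ 2 - 2 * g * ρ0 x * k * φ x * ψ x)
  + (s / 2) * pwInt m l (fun x =>
      ε0 x * ((φd x - k * ψ x) ^ 2 + (ψd x - k * φ x) ^ 2
        + (1 / 3) * (ψd x + k * φ x) ^ 2))

/-- The normalization functional `J(φ,ψ)`. -/
def energyJ (m l : ℝ) (ρ0 : ℝ → ℝ) (φ ψ : ℝ → ℝ) : ℝ :=
  (1 / 2) * pwInt m l (fun x => ρ0 x * ((φ x) ^ 2 + (ψ x) ^ 2))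

/-- The viscous part `E1(φ,ψ)` of the energy. -/
def energyE1 (m l k : ℝ) (ε0 δ0 : ℝ → ℝ) (φ ψ φd ψd : ℝ → ℝ) : ℝ :=
  (1 / 2) * pwInt m l (fun x => (δ0 x + ε0 x / 3) * (ψd x + k * φ x) ^ 2)
  + (1 / 2) * pwInt m l (fun x =>
      ε0 x * ((φd x - k * ψ x) ^ 2 + (ψd x - k * φ x) ^ 2))

/-- `μ(s)`: the infimum of `E(·,·;s)` over admissible pairs with `J = 1`. -/
def muInf (m l g σ k : ℝ) (ρ0 p ε0 δ0 : ℝ → ℝ) (s : ℝ) : ℝ :=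
  sInf { e : ℝ | ∃ φ ψ φd ψd : ℝ → ℝ, Admissible m l φ ψ φd ψd ∧
    energyJ m l ρ0 φ ψ = 1 ∧ e = energyE m l g σ k ρ0 p ε0 δ0 φ ψ φd ψd s }

/-- The hydrostatic steady-state relation `ρ0' = -g ρ0 / p` on each piece. -/
def Hydrostatic (m l g : ℝ) (ρ0 p : ℝ → ℝ) : Prop :=
  (∀ x ∈ Ico (-m) 0, HasDerivWithinAt ρ0 (-g * ρ0 x / p x) (Ico (-m) 0) x) ∧
  (∀ x ∈ Ioc 0 l, HasDerivWithinAt ρ0 (-g * ρ0 x / p x) (Ioc 0 l) x)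

end RT

namespace RT

/-!
The energy is affine in `s`, namely `E(φ, ψ; s) = E(φ, ψ; 0) + s E₁(φ, ψ)` with `E₁ = energyE1`, so
it suffices to find an admissible pair with `E(φ, ψ; 0) < 0`. On the divergence-free pairs
`(-v' / k, v)` the compression term vanishes and, since `-2 g ρ₀ k φ ψ = g ρ₀ (v²)'`,
`2 E(φ, ψ; 0) = σ k² v(0)² + g ∫ ρ₀ (v²)'`.
Concentrating a fixed bump `F` with `F(0) = 1` at the interface, `v(x) = F(x / h)` with `h → 0⁺`,
the integral sees only the one-sided limits of `ρ₀` and tends to `ρ₀⁻ - ρ₀⁺`, so `2 E` tends to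
`σ k² - g (ρ₀⁺ - ρ₀⁻) < 0`. Finally `E ≥ -|g k| J`, so `μ(s)` is a genuine infimum.
-/

section

variable {m l g σ k s : ℝ} {ρ0 p ε0 δ0 φ ψ φd ψd : ℝ → ℝ}

/-! ### Piecewise continuous functions -/

namespace PiecewiseCont

variable {f f₁ f₂ : ℝ → ℝ}

lemma comp₂ {o : ℝ → ℝ → ℝ} (ho : Continuous o.uncurry)
    (h₁ : PiecewiseCont m l f₁) (h₂ : PiecewiseCont m l f₂) :
    PiecewiseCont m l fun x => o (f₁ x) (f₂ x) := by
  obtain ⟨⟨F₁, cF₁, eF₁⟩, ⟨G₁, cG₁, eG₁⟩⟩ := h₁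
  obtain ⟨⟨F₂, cF₂, eF₂⟩, ⟨G₂, cG₂, eG₂⟩⟩ := h₂
  exact ⟨⟨_, ho.comp_continuousOn (cF₁.prodMk cF₂),
      fun x hx => congrArg₂ o (eF₁ hx) (eF₂ hx)⟩,
    ⟨_, ho.comp_continuousOn (cG₁.prodMk cG₂),
      fun x hx => congrArg₂ o (eG₁ hx) (eG₂ hx)⟩⟩

lemma const (c : ℝ) : PiecewiseCont m l fun _ => c :=
  ⟨⟨_, continuousOn_const, fun _ _ => rfl⟩, ⟨_, continuousOn_const, fun _ _ => rfl⟩⟩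

lemma add (h₁ : PiecewiseCont m l f₁) (h₂ : PiecewiseCont m l f₂) :
    PiecewiseCont m l fun x => f₁ x + f₂ x :=
  comp₂ continuous_add h₁ h₂

lemma sub (h₁ : PiecewiseCont m l f₁) (h₂ : PiecewiseCont m l f₂) :
    PiecewiseCont m l fun x => f₁ x - f₂ x :=
  comp₂ continuous_sub h₁ h₂

lemma mul (h₁ : PiecewiseCont m l f₁) (h₂ : PiecewiseCont m l f₂) :
    PiecewiseCont m l fun x => f₁ x * f₂ x :=
  comp₂ continuous_mul h₁ h₂

lemma sq (h : PiecewiseCont m l f) : PiecewiseCont m l fun x => f x ^ 2 := by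
  simpa only [pow_two] using h.mul h

attribute [fun_prop] PiecewiseCont const add sub mul sq

lemma of_continuousOn (hm : 0 ≤ m) (hl : 0 ≤ l) (hf : ContinuousOn f (Icc (-m) l)) :
    PiecewiseCont m l f :=
  ⟨⟨f, hf.mono (Icc_subset_Icc_right hl), fun _ _ => rfl⟩,
    ⟨f, hf.mono (Icc_subset_Icc_left (neg_nonpos.2 hm)), fun _ _ => rfl⟩⟩

lemma intervalIntegrable_left (hm : 0 ≤ m) (hf : PiecewiseCont m l f) :
    IntervalIntegrable f volume (-m) 0 := by
  obtain ⟨⟨F, cF, eF⟩, -⟩ := hf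
  have hm0 : -m ≤ 0 := neg_nonpos.2 hm
  refine (cF.intervalIntegrable_of_Icc hm0).congr_uIoo fun x hx => ?_
  rw [uIoo_of_le hm0] at hx
  exact (eF (Ioo_subset_Ico_self hx)).symm

lemma intervalIntegrable_right (hl : 0 ≤ l) (hf : PiecewiseCont m l f) :
    IntervalIntegrable f volume 0 l := by
  obtain ⟨-, ⟨F, cF, eF⟩⟩ := hf
  refine (cF.intervalIntegrable_of_Icc hl).congr_uIoo fun x hx => ?_
  rw [uIoo_of_le hl] at hx
  exact (eF (Ioo_subset_Ioc_self hx)).symm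

lemma intervalIntegrable (hm : 0 ≤ m) (hl : 0 ≤ l) (hf : PiecewiseCont m l f) :
    IntervalIntegrable f volume (-m) l :=
  (hf.intervalIntegrable_left hm).trans (hf.intervalIntegrable_right hl)

lemma exists_bound (hf : PiecewiseCont m l f) : ∃ C, ∀ x ∈ Icc (-m) l, |f x| ≤ C := by
  obtain ⟨⟨F, cF, eF⟩, ⟨G, cG, eG⟩⟩ := hf
  obtain ⟨A, hA⟩ := isCompact_Icc.exists_bound_of_continuousOn cF
  obtain ⟨B, hB⟩ := isCompact_Icc.exists_bound_of_continuousOn cG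
  refine ⟨max (max A B) |f 0|, fun x hx => ?_⟩
  rcases lt_trichotomy x 0 with h | rfl | h
  · rw [eF ⟨hx.1, h⟩]
    exact (hA x ⟨hx.1, h.le⟩).trans ((le_max_left A B).trans (le_max_left _ _))
  · exact le_max_right _ _
  · rw [eG ⟨h, hx.2⟩]
    exact (hB x ⟨h.le, hx.2⟩).trans ((le_max_right A B).trans (le_max_left _ _))

end PiecewiseCont

lemma Profile.piecewiseCont {f : ℝ → ℝ} (hf : Profile m l f) : PiecewiseCont m l f :=
  ⟨hf.1, ⟨f, hf.2, fun _ _ => rfl⟩⟩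

lemma Profile.tendsto_nhdsGT {f : ℝ → ℝ} (hl : 0 < l) (hf : Profile m l f) :
    Tendsto f (𝓝[>] 0) (𝓝 (f 0)) := by
  have h : Tendsto f (𝓝[Icc 0 l] 0) (𝓝 (f 0)) := hf.2 0 (left_mem_Icc.2 hl.le)
  rw [← nhdsWithin_Ioc_eq_nhdsGT hl]
  exact h.mono_left (nhdsWithin_mono _ Ioc_subset_Icc_self)

section pwInt

variable {f f₁ f₂ : ℝ → ℝ}

lemma pwInt_const_mul (m l c : ℝ) (f : ℝ → ℝ) :
    pwInt m l (fun x => c * f x) = c * pwInt m l f := by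
  simp only [pwInt, intervalIntegral.integral_const_mul, mul_add]

lemma pwInt_eq_integral (hm : 0 ≤ m) (hl : 0 ≤ l) (hf : PiecewiseCont m l f) :
    pwInt m l f = ∫ x in (-m)..l, f x :=
  integral_add_adjacent_intervals (hf.intervalIntegrable_left hm) (hf.intervalIntegrable_right hl)

lemma pwInt_add (hm : 0 ≤ m) (hl : 0 ≤ l) (h₁ : PiecewiseCont m l f₁)
    (h₂ : PiecewiseCont m l f₂) :
    pwInt m l (fun x => f₁ x + f₂ x) = pwInt m l f₁ + pwInt m l f₂ := by
  simp only [pwInt_eq_integral hm hl, h₁, h₂, h₁.add h₂]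
  exact integral_add (h₁.intervalIntegrable hm hl) (h₂.intervalIntegrable hm hl)

lemma pwInt_mono (hm : 0 ≤ m) (hl : 0 ≤ l) (h₁ : PiecewiseCont m l f₁)
    (h₂ : PiecewiseCont m l f₂) (h : ∀ x ∈ Icc (-m) l, f₁ x ≤ f₂ x) :
    pwInt m l f₁ ≤ pwInt m l f₂ := by
  simp only [pwInt_eq_integral hm hl, h₁, h₂]
  exact integral_mono_on (by linarith) (h₁.intervalIntegrable hm hl)
    (h₂.intervalIntegrable hm hl) h

lemma pwInt_nonneg (hm : 0 ≤ m) (hl : 0 ≤ l) (h : ∀ x ∈ Icc (-m) l, 0 ≤ f x) :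
    0 ≤ pwInt m l f :=
  add_nonneg
    (integral_nonneg (neg_nonpos.2 hm) fun x hx => h x ⟨hx.1, hx.2.trans hl⟩)
    (integral_nonneg hl fun x hx => h x ⟨(neg_nonpos.2 hm).trans hx.1, hx.2⟩)

end pwInt

/-! ### Concentration at the interface -/

lemma tendsto_setIntegral_comp_mul_left_mul {f w : ℝ → ℝ} {S : Set ℝ} {a C : ℝ}
    (hS : MeasurableSet S) (hf : AEStronglyMeasurable f) (hC : ∀ x, |f x| ≤ C)
    (hw : IntegrableOn w S)
    (ha : ∀ x ∈ S, x ≠ 0 → Tendsto (fun h => f (h * x)) (𝓝[>] 0) (𝓝 a)) :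
    Tendsto (fun h => ∫ x in S, f (h * x) * w x) (𝓝[>] 0) (𝓝 (a * ∫ x in S, w x)) := by
  rw [← MeasureTheory.integral_const_mul]
  refine tendsto_integral_filter_of_dominated_convergence (fun x => C * ‖w x‖) ?_ ?_
    (hw.norm.const_mul C) ?_
  · filter_upwards [self_mem_nhdsWithin] with h hh
    have hfh : AEStronglyMeasurable (fun x => f (h * x)) :=
      hf.comp_quasiMeasurePreserving (Measure.quasiMeasurePreserving_smul volume (ne_of_gt hh))
    exact hfh.restrict.mul hw.aestronglyMeasurable
  · refine .of_forall fun h => .of_forall fun x => ?_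
    rw [norm_mul, Real.norm_eq_abs (f _)]
    gcongr
    exact hC _
  · filter_upwards [ae_restrict_mem hS, Measure.ae_ne _ 0] with x hx hx0
    exact (ha x hx hx0).mul_const (w x)

lemma tendsto_integral_comp_mul_left_mul {f w : ℝ → ℝ} {a b C : ℝ}
    (hf : AEStronglyMeasurable f) (hC : ∀ x, |f x| ≤ C) (hw : Integrable w)
    (ha : Tendsto f (𝓝[<] 0) (𝓝 a)) (hb : Tendsto f (𝓝[>] 0) (𝓝 b)) :
    Tendsto (fun h => ∫ x, f (h * x) * w x) (𝓝[>] 0)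
      (𝓝 (a * (∫ x in Iic 0, w x) + b * ∫ x in Ioi 0, w x)) := by
  have hmul (x : ℝ) : Tendsto (fun h => h * x) (𝓝[>] 0) (𝓝 0) :=
    tendsto_nhdsWithin_of_tendsto_nhds (Continuous.tendsto' (by fun_prop) _ _ (zero_mul x))
  have hleft : Tendsto (fun h => ∫ x in Iic 0, f (h * x) * w x) (𝓝[>] 0)
      (𝓝 (a * ∫ x in Iic 0, w x)) := by
    refine tendsto_setIntegral_comp_mul_left_mul measurableSet_Iic hf hC hw.integrableOn
      fun x hx hx0 => ha.comp (tendsto_nhdsWithin_iff.2 ⟨hmul x, ?_⟩)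
    filter_upwards [self_mem_nhdsWithin] with h hh
    exact mul_neg_of_pos_of_neg hh (lt_of_le_of_ne hx hx0)
  have hright : Tendsto (fun h => ∫ x in Ioi 0, f (h * x) * w x) (𝓝[>] 0)
      (𝓝 (b * ∫ x in Ioi 0, w x)) := by
    refine tendsto_setIntegral_comp_mul_left_mul measurableSet_Ioi hf hC hw.integrableOn
      fun x hx _ => hb.comp (tendsto_nhdsWithin_iff.2 ⟨hmul x, ?_⟩)
    filter_upwards [self_mem_nhdsWithin] with h hh
    exact mul_pos (mem_Ioi.1 hh) (mem_Ioi.1 hx)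
  refine (hleft.add hright).congr' ?_
  filter_upwards [self_mem_nhdsWithin] with h hh
  have hfh : AEStronglyMeasurable (fun x => f (h * x)) :=
    hf.comp_quasiMeasurePreserving (Measure.quasiMeasurePreserving_smul volume (ne_of_gt hh))
  have hint : Integrable fun x => f (h * x) * w x :=
    hw.bdd_mul hfh (.of_forall fun x => hC (h * x))
  exact intervalIntegral.integral_Iic_add_Ioi hint.integrableOn hint.integrableOn

lemma pwInt_mul_dilation {f w : ℝ → ℝ} {h : ℝ} (hm : 0 ≤ m) (hl : 0 ≤ l) (hh : 0 < h)
    (hf : PiecewiseCont m l f) (hw : Continuous w) :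
    pwInt m l (fun x => f x * (h⁻¹ * w (h⁻¹ * x))) =
      ∫ x, (Ioc (-m) l).indicator f (h * x) * w x := by
  have hwh : PiecewiseCont m l fun x => h⁻¹ * w (h⁻¹ * x) :=
    .of_continuousOn hm hl (by fun_prop)
  calc pwInt m l (fun x => f x * (h⁻¹ * w (h⁻¹ * x)))
      = ∫ x, h⁻¹ * ((Ioc (-m) l).indicator f (h * (h⁻¹ * x)) * w (h⁻¹ * x)) := by
        rw [pwInt_eq_integral hm hl (hf.mul hwh), integral_of_le (by linarith),
          ← MeasureTheory.integral_indicator measurableSet_Ioc]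
        refine integral_congr_ae (.of_forall fun x => ?_)
        simp only [indicator_mul_left, mul_inv_cancel_left₀ hh.ne']
        ring
    _ = ∫ x, (Ioc (-m) l).indicator f (h * x) * w x := by
        rw [MeasureTheory.integral_const_mul,
          Measure.integral_comp_inv_mul_left
            (fun x => (Ioc (-m) l).indicator f (h * x) * w x), abs_of_pos hh, smul_eq_mul,
          inv_mul_cancel_left₀ hh.ne']

lemma tendsto_pwInt_mul_dilation {f w : ℝ → ℝ} {a b : ℝ} (hm : 0 < m) (hl : 0 < l)
    (hf : PiecewiseCont m l f) (ha : Tendsto f (𝓝[<] 0) (𝓝 a)) (hb : Tendsto f (𝓝[>] 0) (𝓝 b))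
    (hw : Continuous w) (hwi : Integrable w) :
    Tendsto (fun h => pwInt m l fun x => f x * (h⁻¹ * w (h⁻¹ * x))) (𝓝[>] 0)
      (𝓝 (a * (∫ x in Iic 0, w x) + b * ∫ x in Ioi 0, w x)) := by
  set f₀ := (Ioc (-m) l).indicator f
  obtain ⟨C, hC⟩ := hf.exists_bound
  have hf₀ : AEStronglyMeasurable f₀ :=
    (aestronglyMeasurable_indicator_iff measurableSet_Ioc).2
      (hf.intervalIntegrable hm.le hl.le).aestronglyMeasurable
  have hC₀ (x : ℝ) : |f₀ x| ≤ C := by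
    by_cases hx : x ∈ Ioc (-m) l
    · simpa only [f₀, indicator_of_mem hx] using hC x (Ioc_subset_Icc_self hx)
    · simpa only [f₀, indicator_of_notMem hx, abs_zero] using
        (abs_nonneg _).trans (hC 0 ⟨by linarith, hl.le⟩)
  have hff₀ : f =ᶠ[𝓝 0] f₀ := by
    filter_upwards [Ioc_mem_nhds (neg_neg_of_pos hm) hl] with x hx
    exact (indicator_of_mem hx f).symm
  refine (tendsto_integral_comp_mul_left_mul hf₀ hC₀ hwi
    (ha.congr' (hff₀.filter_mono nhdsWithin_le_nhds))
    (hb.congr' (hff₀.filter_mono nhdsWithin_le_nhds))).congr' ?_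
  filter_upwards [self_mem_nhdsWithin] with h hh
  exact (pwInt_mul_dilation hm.le hl.le hh hf hw).symm

lemma tendsto_pwInt_mul_deriv_dilation {f V : ℝ → ℝ} {a b : ℝ} (hm : 0 < m) (hl : 0 < l)
    (hf : PiecewiseCont m l f) (ha : Tendsto f (𝓝[<] 0) (𝓝 a)) (hb : Tendsto f (𝓝[>] 0) (𝓝 b))
    (hV : ContDiff ℝ 1 V) (hVc : HasCompactSupport V) :
    Tendsto (fun h => pwInt m l fun x => f x * deriv (fun y => V (h⁻¹ * y)) x) (𝓝[>] 0)
      (𝓝 ((a - b) * V 0)) := by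
  have hV' : Continuous (deriv V) := hV.continuous_deriv le_rfl
  have hlim := tendsto_pwInt_mul_dilation hm hl hf ha hb hV'
    (hV'.integrable_of_hasCompactSupport hVc.deriv)
  rw [hVc.integral_Iic_deriv_eq hV, hVc.integral_Ioi_deriv_eq hV] at hlim
  simpa only [deriv_comp_mul_left, smul_eq_mul, sub_mul, mul_neg, ← sub_eq_add_neg] using hlim

lemma tsupport_dilation_subset {F : ℝ → ℝ} {h : ℝ} (hm : 0 ≤ m) (hl : 0 ≤ l) (hh : h ∈ Ioc 0 1)
    (hF : tsupport F ⊆ Ioo (-m) l) : tsupport (fun x => F (h⁻¹ * x)) ⊆ Ioo (-m) l := by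
  intro x hx
  have hy : h⁻¹ * x ∈ Ioo (-m) l :=
    hF (tsupport_comp_subset_preimage (f := fun x => h⁻¹ * x) F (by fun_prop) hx)
  rw [← mul_inv_cancel_left₀ hh.1.ne' x]
  constructor <;> nlinarith [hy.1, hy.2, hh.1, hh.2]

/-! ### Admissible pairs and their energy -/

lemma PiecewiseC1.piecewiseCont {f fd : ℝ → ℝ} (hm : 0 ≤ m) (hl : 0 ≤ l)
    (h : PiecewiseC1 m l f fd) : PiecewiseCont m l f :=
  .of_continuousOn hm hl h.1

lemma PiecewiseC1.piecewiseCont_deriv {f fd : ℝ → ℝ} (h : PiecewiseC1 m l f fd) :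
    PiecewiseCont m l fd :=
  h.2.2.2

lemma PiecewiseC1.const_mul {f fd : ℝ → ℝ} (c : ℝ) (h : PiecewiseC1 m l f fd) :
    PiecewiseC1 m l (fun x => c * f x) fun x => c * fd x :=
  ⟨continuousOn_const.mul h.1, fun x hx => (h.2.1 x hx).const_mul c,
    fun x hx => (h.2.2.1 x hx).const_mul c, .mul (.const c) h.2.2.2⟩

lemma PiecewiseC1.of_contDiff {f : ℝ → ℝ} (hm : 0 ≤ m) (hl : 0 ≤ l) (hf : ContDiff ℝ 1 f) :
    PiecewiseC1 m l f (deriv f) := by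
  have hderiv (x : ℝ) : HasDerivAt f (deriv f x) x :=
    (hf.differentiable one_ne_zero x).hasDerivAt
  exact ⟨hf.continuous.continuousOn, fun x _ => (hderiv x).hasDerivWithinAt,
    fun x _ => (hderiv x).hasDerivWithinAt,
    .of_continuousOn hm hl (hf.continuous_deriv le_rfl).continuousOn⟩

lemma Admissible.const_mul (c : ℝ) (h : Admissible m l φ ψ φd ψd) :
    Admissible m l (fun x => c * φ x) (fun x => c * ψ x) (fun x => c * φd x)
      fun x => c * ψd x := by
  obtain ⟨hφ, hψ, hφm, hφl, hψm, hψl⟩ := h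
  exact ⟨hφ.const_mul c, hψ.const_mul c, by simp [hφm], by simp [hφl], by simp [hψm],
    by simp [hψl]⟩

lemma energyJ_const_mul (c : ℝ) :
    energyJ m l ρ0 (fun x => c * φ x) (fun x => c * ψ x) = c ^ 2 * energyJ m l ρ0 φ ψ := by
  simp only [energyJ, mul_left_comm (c ^ 2), ← pwInt_const_mul]
  congr! 3
  ring

lemma energyE_const_mul (c : ℝ) :
    energyE m l g σ k ρ0 p ε0 δ0 (fun x => c * φ x) (fun x => c * ψ x) (fun x => c * φd x)
      (fun x => c * ψd x) s = c ^ 2 * energyE m l g σ k ρ0 p ε0 δ0 φ ψ φd ψd s := by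
  simp only [energyE, mul_add, mul_left_comm (c ^ 2), ← pwInt_const_mul]
  congr! 4 <;> ring_nf

lemma energyJ_pos (hm : 0 ≤ m) (hl : 0 < l) (hρ : Profile m l ρ0)
    (hρpos : ∀ x ∈ Icc (-m) l, 0 < ρ0 x) (h : Admissible m l φ ψ φd ψd) (hψ0 : ψ 0 ≠ 0) :
    0 < energyJ m l ρ0 φ ψ := by
  have hm0 : -m ≤ 0 := neg_nonpos.2 hm
  have hleft : 0 ≤ ∫ x in (-m)..0, ρ0 x * (φ x ^ 2 + ψ x ^ 2) := by
    refine integral_nonneg hm0 fun x hx => ?_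
    have := hρpos x ⟨hx.1, hx.2.trans hl.le⟩
    positivity
  have hcont : ContinuousOn (fun x => ρ0 x * (φ x ^ 2 + ψ x ^ 2)) (Icc 0 l) :=
    hρ.2.mul (((h.1.1.pow 2).add (h.2.1.1.pow 2)).mono (Icc_subset_Icc_left hm0))
  have hright : 0 < ∫ x in 0..l, ρ0 x * (φ x ^ 2 + ψ x ^ 2) := by
    refine integral_pos hl hcont (fun x hx => ?_) ⟨0, left_mem_Icc.2 hl.le, ?_⟩
    · have := hρpos x ⟨hm0.trans hx.1.le, hx.2⟩
      positivity
    · have := hρpos 0 ⟨hm0, hl.le⟩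
      positivity
  exact mul_pos one_half_pos (add_pos_of_nonneg_of_pos hleft hright)

lemma exists_normalized_energyE_neg (hadm : Admissible m l φ ψ φd ψd)
    (hJ : 0 < energyJ m l ρ0 φ ψ) (hE : energyE m l g σ k ρ0 p ε0 δ0 φ ψ φd ψd s < 0) :
    ∃ φ ψ φd ψd : ℝ → ℝ, Admissible m l φ ψ φd ψd ∧ energyJ m l ρ0 φ ψ = 1 ∧
      energyE m l g σ k ρ0 p ε0 δ0 φ ψ φd ψd s < 0 := by
  have hc : (√(energyJ m l ρ0 φ ψ))⁻¹ ^ 2 = (energyJ m l ρ0 φ ψ)⁻¹ := by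
    rw [inv_pow, Real.sq_sqrt hJ.le]
  refine ⟨_, _, _, _, hadm.const_mul (√(energyJ m l ρ0 φ ψ))⁻¹, ?_, ?_⟩
  · rw [energyJ_const_mul, hc, inv_mul_cancel₀ hJ.ne']
  · rw [energyE_const_mul, hc]
    exact mul_neg_of_pos_of_neg (inv_pos.2 hJ) hE

lemma energyE_eq_add_mul_energyE1 (hm : 0 ≤ m) (hl : 0 ≤ l) (hρ : PiecewiseCont m l ρ0)
    (hp : PiecewiseCont m l p) (hε : PiecewiseCont m l ε0) (hδ : PiecewiseCont m l δ0)
    (h : Admissible m l φ ψ φd ψd) :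
    energyE m l g σ k ρ0 p ε0 δ0 φ ψ φd ψd s =
      energyE m l g σ k ρ0 p ε0 δ0 φ ψ φd ψd 0 + s * energyE1 m l k ε0 δ0 φ ψ φd ψd := by
  have hφ := h.1.piecewiseCont hm hl
  have hψ := h.2.1.piecewiseCont hm hl
  have hφd := h.1.piecewiseCont_deriv
  have hψd := h.2.1.piecewiseCont_deriv
  have hpressure : pwInt m l (fun x =>
        (s * δ0 x + p x * ρ0 x) * (ψd x + k * φ x) ^ 2 - 2 * g * ρ0 x * k * φ x * ψ x) =
      pwInt m l (fun x =>
        (0 * δ0 x + p x * ρ0 x) * (ψd x + k * φ x) ^ 2 - 2 * g * ρ0 x * k * φ x * ψ x) +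
      s * pwInt m l (fun x => δ0 x * (ψd x + k * φ x) ^ 2) := by
    rw [← pwInt_const_mul, ← pwInt_add hm hl (by fun_prop) (by fun_prop)]
    congr! 2
    ring
  have hviscous : energyE1 m l k ε0 δ0 φ ψ φd ψd =
      1 / 2 * (pwInt m l (fun x => δ0 x * (ψd x + k * φ x) ^ 2) +
        pwInt m l (fun x => ε0 x * ((φd x - k * ψ x) ^ 2 + (ψd x - k * φ x) ^ 2
          + (1 / 3) * (ψd x + k * φ x) ^ 2))) := by
    simp only [energyE1, div_eq_mul_inv]
    rw [← mul_add, ← pwInt_add hm hl (by fun_prop) (by fun_prop),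
      ← pwInt_add hm hl (by fun_prop) (by fun_prop)]
    congr! 3
    ring
  rw [hviscous]
  simp only [energyE]
  rw [hpressure]
  ring

lemma eventually_energyE_neg (hm : 0 ≤ m) (hl : 0 ≤ l) (hρ : PiecewiseCont m l ρ0)
    (hp : PiecewiseCont m l p) (hε : PiecewiseCont m l ε0) (hδ : PiecewiseCont m l δ0)
    (h : Admissible m l φ ψ φd ψd) (hE : energyE m l g σ k ρ0 p ε0 δ0 φ ψ φd ψd 0 < 0) :
    ∀ᶠ s in 𝓝 0, energyE m l g σ k ρ0 p ε0 δ0 φ ψ φd ψd s < 0 := by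
  have haffine : energyE m l g σ k ρ0 p ε0 δ0 φ ψ φd ψd = fun s =>
      energyE m l g σ k ρ0 p ε0 δ0 φ ψ φd ψd 0 + s * energyE1 m l k ε0 δ0 φ ψ φd ψd :=
    funext fun s => energyE_eq_add_mul_energyE1 hm hl hρ hp hε hδ h
  have hcont : Continuous (energyE m l g σ k ρ0 p ε0 δ0 φ ψ φd ψd) := by
    rw [haffine]
    fun_prop
  exact hcont.continuousAt.eventually_lt_const hE

/-! ### The infimum -/

lemma neg_abs_mul_energyJ_le_energyE (hm : 0 ≤ m) (hl : 0 ≤ l) (hσ : 0 ≤ σ) (hs : 0 ≤ s)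
    (hprof : ProfilesHyp m l ρ0 p ε0 δ0) (h : Admissible m l φ ψ φd ψd) :
    -|g * k| * energyJ m l ρ0 φ ψ ≤ energyE m l g σ k ρ0 p ε0 δ0 φ ψ φd ψd s := by
  obtain ⟨hρ, hp, -, hδ, hρpos, hppos, hεpos, hδnonneg⟩ := hprof
  have hρ := hρ.piecewiseCont
  have hp := hp.piecewiseCont
  have hδ := hδ.piecewiseCont
  have hφ := h.1.piecewiseCont hm hl
  have hψ := h.2.1.piecewiseCont hm hl
  have hψd := h.2.1.piecewiseCont_deriv
  have hpotential : -|g * k| * pwInt m l (fun x => ρ0 x * (φ x ^ 2 + ψ x ^ 2)) ≤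
      pwInt m l (fun x =>
        (s * δ0 x + p x * ρ0 x) * (ψd x + k * φ x) ^ 2 - 2 * g * ρ0 x * k * φ x * ψ x) := by
    rw [← pwInt_const_mul]
    refine pwInt_mono hm hl (by fun_prop) (by fun_prop) fun x hx => ?_
    have hρx := hρpos x hx
    have hpx := hppos x hx
    have hδx := hδnonneg x hx
    have hcompression : 0 ≤ (s * δ0 x + p x * ρ0 x) * (ψd x + k * φ x) ^ 2 := by positivity
    have hcross : g * k * (2 * φ x * ψ x) ≤ |g * k| * (φ x ^ 2 + ψ x ^ 2) := by
      refine (le_abs_self _).trans ?_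
      rw [abs_mul (g * k)]
      gcongr
      exact abs_le.2 ⟨by linarith [sq_nonneg (φ x + ψ x)], by linarith [sq_nonneg (φ x - ψ x)]⟩
    linarith [mul_le_mul_of_nonneg_left hcross hρx.le]
  have hviscous : 0 ≤ pwInt m l (fun x =>
      ε0 x * ((φd x - k * ψ x) ^ 2 + (ψd x - k * φ x) ^ 2
        + (1 / 3) * (ψd x + k * φ x) ^ 2)) := by
    refine pwInt_nonneg hm hl fun x hx => ?_
    have hεx := hεpos x hx
    positivity
  have htension : 0 ≤ σ * k ^ 2 / 2 * ψ 0 ^ 2 := by positivity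
  unfold energyE energyJ
  linarith [mul_nonneg (div_nonneg hs zero_le_two) hviscous]

lemma muInf_le_energyE (hm : 0 ≤ m) (hl : 0 ≤ l) (hσ : 0 ≤ σ) (hs : 0 ≤ s)
    (hprof : ProfilesHyp m l ρ0 p ε0 δ0) (h : Admissible m l φ ψ φd ψd)
    (hJ : energyJ m l ρ0 φ ψ = 1) :
    muInf m l g σ k ρ0 p ε0 δ0 s ≤ energyE m l g σ k ρ0 p ε0 δ0 φ ψ φd ψd s := by
  refine csInf_le ⟨-|g * k|, ?_⟩ ⟨φ, ψ, φd, ψd, h, hJ, rfl⟩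
  rintro _ ⟨φ', ψ', φd', ψd', h', hJ', rfl⟩
  simpa only [hJ', mul_one] using
    neg_abs_mul_energyJ_le_energyE (g := g) (k := k) hm hl hσ hs hprof h'

/-! ### Divergence-free test pairs -/

/-- The horizontal component `φ = -v' / k` for which `(φ, v)` is divergence free, that is
`v' + k φ = 0`. -/
def divFreePartner (k : ℝ) (v : ℝ → ℝ) : ℝ → ℝ := fun x => -deriv v x / k

lemma admissible_divFreePartner {v : ℝ → ℝ} (hm : 0 ≤ m) (hl : 0 ≤ l) (hv : ContDiff ℝ 2 v)
    (hsupp : tsupport v ⊆ Ioo (-m) l) :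
    Admissible m l (divFreePartner k v) v (deriv (divFreePartner k v)) (deriv v) := by
  have hm' : -m ∉ tsupport v := fun hx => lt_irrefl _ (hsupp hx).1
  have hl' : l ∉ tsupport v := fun hx => lt_irrefl _ (hsupp hx).2
  have hpartner : ContDiff ℝ 1 (divFreePartner k v) := (hv.deriv' (n := 1)).neg.div_const k
  refine ⟨.of_contDiff hm hl hpartner, .of_contDiff hm hl (hv.of_le one_le_two), ?_, ?_,
    image_eq_zero_of_notMem_tsupport hm', image_eq_zero_of_notMem_tsupport hl'⟩
  · simp [divFreePartner, deriv_of_notMem_tsupport hm']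
  · simp [divFreePartner, deriv_of_notMem_tsupport hl']

lemma energyE_divFreePartner_zero {v : ℝ → ℝ} (hk : k ≠ 0) (hv : Differentiable ℝ v)
    (φd : ℝ → ℝ) :
    energyE m l g σ k ρ0 p ε0 δ0 (divFreePartner k v) v φd (deriv v) 0 =
      1 / 2 * (σ * k ^ 2 * v 0 ^ 2 + g * pwInt m l fun x => ρ0 x * deriv (fun y => v y ^ 2) x) := by
  have hsq (x : ℝ) : deriv (fun y => v y ^ 2) x = 2 * v x * deriv v x := by
    simpa using ((hv x).hasDerivAt.fun_pow 2).deriv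
  have hdiv (x : ℝ) : k * divFreePartner k v x = -deriv v x := by
    simp only [divFreePartner]
    field_simp
  have hintegrand (x : ℝ) : (0 * δ0 x + p x * ρ0 x) * (deriv v x + k * divFreePartner k v x) ^ 2
        - 2 * g * ρ0 x * k * divFreePartner k v x * v x =
      g * (ρ0 x * deriv (fun y => v y ^ 2) x) := by
    rw [mul_assoc _ k, hdiv, hsq]
    ring
  simp only [energyE, hintegrand, pwInt_const_mul]
  ring

lemma exists_admissible_energyE_zero_neg {a b : ℝ} (hm : 0 < m) (hl : 0 < l) (hk : k ≠ 0)
    (hρ : PiecewiseCont m l ρ0) (ha : Tendsto ρ0 (𝓝[<] 0) (𝓝 a))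
    (hb : Tendsto ρ0 (𝓝[>] 0) (𝓝 b)) (hjump : σ * k ^ 2 < g * (b - a)) :
    ∃ φ ψ φd ψd : ℝ → ℝ, Admissible m l φ ψ φd ψd ∧ ψ 0 ≠ 0 ∧
      energyE m l g σ k ρ0 p ε0 δ0 φ ψ φd ψd 0 < 0 := by
  obtain ⟨F, hFsupp, hFcompact, hF, -, hF0⟩ :=
    exists_contDiff_tsupport_subset (n := 2) (Ioo_mem_nhds (neg_neg_of_pos hm) hl)
  have hdiff (h : ℝ) : ContDiff ℝ 2 fun x => F (h⁻¹ * x) := hF.comp (by fun_prop)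
  have hFsq : HasCompactSupport fun x => F x ^ 2 :=
    hFcompact.comp_left (g := fun y : ℝ => y ^ 2) (zero_pow two_ne_zero)
  have hlim := ((tendsto_pwInt_mul_deriv_dilation hm hl hρ ha hb
    ((hF.pow 2).of_le one_le_two) hFsq).const_mul g).const_add (σ * k ^ 2)
  have hneg : ∀ᶠ h in 𝓝[>] 0, σ * k ^ 2 + g * (pwInt m l fun x =>
      ρ0 x * deriv (fun y => F (h⁻¹ * y) ^ 2) x) < 0 :=
    hlim.eventually_lt_const (by rw [hF0]; linarith)
  obtain ⟨h, hhneg, hh⟩ := (hneg.and (Ioc_mem_nhdsGT one_pos)).exists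
  refine ⟨divFreePartner k fun x => F (h⁻¹ * x), fun x => F (h⁻¹ * x), _, _,
    admissible_divFreePartner hm.le hl.le (hdiff h)
    (tsupport_dilation_subset hm.le hl.le hh hFsupp), by simp [hF0], ?_⟩
  rw [energyE_divFreePartner_zero hk ((hdiff h).differentiable two_ne_zero), mul_zero, hF0]
  linarith

end

theorem muInf_negative_for_small_s_general (m l g σ k : ℝ) (ρ0 p ε0 δ0 : ℝ → ℝ) (ρ0minus : ℝ)
    (hm : 0 < m) (hl : 0 < l) (hσ : 0 ≤ σ) (hk : k ≠ 0)
    (hprof : ProfilesHyp m l ρ0 p ε0 δ0)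
    (hρm : Tendsto ρ0 (𝓝[<] 0) (𝓝 ρ0minus))
    (hσk : σ * k ^ 2 < g * (ρ0 0 - ρ0minus)) :
    ∃ s₀ : ℝ, 0 < s₀ ∧ ∀ s : ℝ, 0 < s → s ≤ s₀ →
      muInf m l g σ k ρ0 p ε0 δ0 s < 0 ∧
      ∃ φ ψ φd ψd : ℝ → ℝ, Admissible m l φ ψ φd ψd ∧
        energyJ m l ρ0 φ ψ = 1 ∧
        energyE m l g σ k ρ0 p ε0 δ0 φ ψ φd ψd s < 0 := by
  have ⟨hρ, hp, hε, hδ, hρpos, _⟩ := hprof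
  obtain ⟨φ, ψ, φd, ψd, hadm, hψ0, hE0⟩ := exists_admissible_energyE_zero_neg
    (p := p) (ε0 := ε0) (δ0 := δ0) hm hl hk hρ.piecewiseCont hρm (hρ.tendsto_nhdsGT hl) hσk
  have hJ : 0 < energyJ m l ρ0 φ ψ := energyJ_pos hm.le hl hρ hρpos hadm hψ0
  have hsmall := eventually_energyE_neg hm.le hl.le hρ.piecewiseCont hp.piecewiseCont
    hε.piecewiseCont hδ.piecewiseCont hadm hE0
  obtain ⟨s₀, hs₀, hneg⟩ := mem_nhdsGT_iff_exists_Ioc_subset.1 (mem_nhdsWithin_of_mem_nhds hsmall)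
  refine ⟨s₀, hs₀, fun s hs hs' => ?_⟩
  obtain ⟨φ', ψ', φd', ψd', hadm', hJ', hE'⟩ :=
    exists_normalized_energyE_neg hadm hJ (hneg ⟨hs, hs'⟩)
  exact ⟨(muInf_le_energyE hm.le hl.le hσ hs.le hprof hadm' hJ').trans_lt hE',
    φ', ψ', φd', ψd', hadm', hJ', hE'⟩

/-- If `ρ0⁺ > ρ0⁻` and `σ k² < g (ρ0⁺ - ρ0⁻)`, then `μ(s) < 0` for all sufficiently
small `s > 0`; in particular for every such `s` there is an admissible pair with
`J(φ,ψ) = 1` and negative energy. Here `ρ0⁺ = ρ0 0` and `ρ0⁻` is the left limit of `ρ0`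
at `0`. -/
theorem muInf_negative_for_small_s (m l g σ k : ℝ) (ρ0 p ε0 δ0 : ℝ → ℝ) (ρ0minus : ℝ)
    (hm : 0 < m) (hl : 0 < l) (hg : 0 < g) (hσ : 0 ≤ σ) (hk : 0 < k)
    (hprof : ProfilesHyp m l ρ0 p ε0 δ0)
    (hhydro : Hydrostatic m l g ρ0 p)
    (hρm : Tendsto ρ0 (𝓝[<] 0) (𝓝 ρ0minus))
    (hjump : ρ0minus < ρ0 0)
    (hσk : σ * k ^ 2 < g * (ρ0 0 - ρ0minus)) :
    ∃ s₀ : ℝ, 0 < s₀ ∧ ∀ s : ℝ, 0 < s → s ≤ s₀ →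
      muInf m l g σ k ρ0 p ε0 δ0 s < 0 ∧
      ∃ φ ψ φd ψd : ℝ → ℝ, Admissible m l φ ψ φd ψd ∧
        energyJ m l ρ0 φ ψ = 1 ∧
        energyE m l g σ k ρ0 p ε0 δ0 φ ψ φd ψd s < 0 := by
  exact muInf_negative_for_small_s_general m l g σ k ρ0 p ε0 δ0 ρ0minus
    hm hl hσ hk.ne' hprof hρm hσk

end RT
end
end

section
/- Let s > 0, k ≥ 0, and suppose θ : ℝ → ℝ is continuous on [-m,ℓ], twice continuously differentiable on [-m,0] and on [0,ℓ] (one-sided derivatives at -m, 0, ℓ), with θ(-m) = θ(ℓ) = 0, with matching flux at the interface s ε0⁻ θ'(0⁻) = s ε0⁺ θ'(0⁺), and satisfying the ODE −(s ε0 θ')'(x) + (s² ρ0(x) + s ε0(x) k²) θ(x) = 0 for all x ∈ [-m,0) ∪ (0,ℓ]. Then θ(x) = 0 for all x ∈ [-m,ℓ]. -/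
open Set Filter Topology

noncomputable section

namespace RT14

/-- `f` restricted to `[-m,0)` extends continuously to `[-m,0]`, and `f` restricted to
`(0,ℓ]` extends continuously to `[0,ℓ]`. -/
def PiecewiseCont (m l : ℝ) (f : ℝ → ℝ) : Prop :=
  (∃ F : ℝ → ℝ, ContinuousOn F (Icc (-m) 0) ∧ EqOn f F (Ico (-m) 0)) ∧
  (∃ F : ℝ → ℝ, ContinuousOn F (Icc 0 l) ∧ EqOn f F (Ioc 0 l))

/-!
Write the equation as `w' = q θ`, where `w = p θ'` is the flux. The product `w θ` is continuous
across the interface, because `θ` and the flux are, and its derivative `w² / p + q θ²` is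
nonnegative elsewhere, so `w θ` is monotone. It vanishes at both endpoints, hence everywhere; then
`w² / p = 0`, so `θ' = 0` away from the interface and `θ` is constant, equal to its boundary
value `0`.
-/

theorem monotoneOn_Icc_of_hasDerivAt_nonneg_off_finite {S : Set ℝ} (hS : S.Finite)
    {a b : ℝ} {f f' : ℝ → ℝ} (hf : ContinuousOn f (Icc a b))
    (hf' : ∀ x ∈ Ioo a b \ S, HasDerivAt f (f' x) x) (hf'_nonneg : ∀ x ∈ Ioo a b \ S, 0 ≤ f' x) :
    MonotoneOn f (Icc a b) := by
  induction S, hS using Set.Finite.induction_on generalizing a b with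
  | empty =>
    simp only [sdiff_empty] at hf' hf'_nonneg
    refine monotoneOn_of_hasDerivWithinAt_nonneg (f' := f') (convex_Icc a b) hf ?_ ?_ <;>
      rw [interior_Icc]
    exacts [fun x hx => (hf' x hx).hasDerivWithinAt, hf'_nonneg]
  | @insert c S _ _ ih =>
    have mono_of_notMem {u v : ℝ} (hau : a ≤ u) (hvb : v ≤ b) (hc : c ∉ Ioo u v) :
        MonotoneOn f (Icc u v) := by
      have hsub : Ioo u v \ S ⊆ Ioo a b \ insert c S := fun x hx =>
        ⟨Ioo_subset_Ioo hau hvb hx.1, fun h => h.elim (fun hxc => hc (hxc ▸ hx.1)) hx.2⟩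
      exact ih (hf.mono (Icc_subset_Icc hau hvb)) (fun x hx => hf' x (hsub hx))
        (fun x hx => hf'_nonneg x (hsub hx))
    by_cases hc : c ∈ Ioo a b
    · have hleft := mono_of_notMem le_rfl hc.2.le right_notMem_Ioo
      have hright := mono_of_notMem hc.1.le le_rfl left_notMem_Ioo
      rw [← Icc_union_Icc_eq_Icc hc.1.le hc.2.le]
      exact hleft.union_right hright (isGreatest_Icc hc.1.le) (isLeast_Icc hc.2.le)
    · exact mono_of_notMem le_rfl le_rfl hc

theorem eq_left_of_hasDerivAt_zero_off_finite {S : Set ℝ} (hS : S.Finite) {a b : ℝ} {f : ℝ → ℝ}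
    (hf : ContinuousOn f (Icc a b)) (hf' : ∀ x ∈ Ioo a b \ S, HasDerivAt f 0 x) :
    ∀ x ∈ Icc a b, f x = f a := by
  intro x hx
  have ha : a ∈ Icc a b := left_mem_Icc.2 (hx.1.trans hx.2)
  have hmono : MonotoneOn f (Icc a b) :=
    monotoneOn_Icc_of_hasDerivAt_nonneg_off_finite hS hf hf' fun _ _ => le_rfl
  have hmono_neg : MonotoneOn (-f) (Icc a b) :=
    monotoneOn_Icc_of_hasDerivAt_nonneg_off_finite hS hf.neg (fun y hy => (hf' y hy).neg)
      fun _ _ => neg_zero.ge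
  exact le_antisymm (neg_le_neg_iff.1 (hmono_neg ha hx hx.1)) (hmono ha hx hx.1)

theorem eq_zero_of_hasDerivAt_flux_off_finite {S : Set ℝ} (hS : S.Finite) {a b : ℝ}
    {p q θ w : ℝ → ℝ} (hp : ∀ x ∈ Ioo a b \ S, 0 < p x) (hq : ∀ x ∈ Ioo a b \ S, 0 ≤ q x)
    (hθ : ContinuousOn θ (Icc a b)) (hw : ContinuousOn w (Icc a b))
    (hθ' : ∀ x ∈ Ioo a b \ S, HasDerivAt θ (w x / p x) x)
    (hw' : ∀ x ∈ Ioo a b \ S, HasDerivAt w (q x * θ x) x)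
    (hθa : θ a = 0) (hθb : θ b = 0) :
    ∀ x ∈ Icc a b, θ x = 0 := by
  have henergy_deriv : ∀ x ∈ Ioo a b \ S,
      HasDerivAt (w * θ) (q x * θ x ^ 2 + w x ^ 2 / p x) x := fun x hx =>
    ((hw' x hx).mul (hθ' x hx)).congr_deriv (by ring)
  have hq_term : ∀ x ∈ Ioo a b \ S, 0 ≤ q x * θ x ^ 2 := fun x hx =>
    mul_nonneg (hq x hx) (sq_nonneg _)
  have hw_term : ∀ x ∈ Ioo a b \ S, 0 ≤ w x ^ 2 / p x := fun x hx =>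
    div_nonneg (sq_nonneg _) (hp x hx).le
  have henergy_mono : MonotoneOn (w * θ) (Icc a b) :=
    monotoneOn_Icc_of_hasDerivAt_nonneg_off_finite hS (hw.mul hθ) henergy_deriv
      fun x hx => add_nonneg (hq_term x hx) (hw_term x hx)
  have henergy_zero : ∀ x ∈ Icc a b, (w * θ) x = 0 := fun x hx => by
    have hab := hx.1.trans hx.2
    have hlower := henergy_mono (left_mem_Icc.2 hab) hx hx.1
    have hupper := henergy_mono hx (right_mem_Icc.2 hab) hx.2
    simp only [Pi.mul_apply, hθa, hθb, mul_zero] at hlower hupper ⊢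
    exact le_antisymm hupper hlower
  have hflux_zero : ∀ x ∈ Ioo a b \ S, w x = 0 := fun x hx => by
    have hlocal : w * θ =ᶠ[𝓝 x] fun _ => 0 :=
      mem_of_superset (Icc_mem_nhds hx.1.1 hx.1.2) henergy_zero
    have hsum : q x * θ x ^ 2 + w x ^ 2 / p x = 0 :=
      (henergy_deriv x hx).unique ((hasDerivAt_const x (0 : ℝ)).congr_of_eventuallyEq hlocal)
    have hquot := ((add_eq_zero_iff_of_nonneg (hq_term x hx) (hw_term x hx)).1 hsum).2
    exact (pow_eq_zero_iff two_ne_zero).1 ((div_eq_zero_iff.1 hquot).resolve_right (hp x hx).ne')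
  intro x hx
  rw [eq_left_of_hasDerivAt_zero_off_finite hS hθ
    (fun y hy => (hθ' y hy).congr_deriv (by rw [hflux_zero y hy, zero_div])) x hx, hθa]

theorem continuousOn_update_of_tendsto_left_right {X Y : Type*} [TopologicalSpace X]
    [LinearOrder X] [T1Space X] [TopologicalSpace Y] {s : Set X} {c : X} {f : X → Y} {y : Y}
    (hf : ContinuousOn f (s \ {c})) (hleft : Tendsto f (𝓝[<] c) (𝓝 y))
    (hright : Tendsto f (𝓝[>] c) (𝓝 y)) : ContinuousOn (Function.update f c y) s := by
  refine continuousOn_update_iff.2 ⟨hf, fun _ => ?_⟩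
  have hpunctured : Tendsto f (𝓝[≠] c) (𝓝 y) := by
    rw [← nhdsLT_sup_nhdsGT]
    exact hleft.sup hright
  exact hpunctured.mono_left (nhdsWithin_mono c fun _ hx => hx.2)

theorem hasDerivWithinAt_Icc_sdiff_singleton {E : Type*} [NormedAddCommGroup E] [NormedSpace ℝ E]
    {a b c : ℝ} {f f' : ℝ → E} (hleft : ∀ x ∈ Ico a c, HasDerivWithinAt f (f' x) (Ico a c) x)
    (hright : ∀ x ∈ Ioc c b, HasDerivWithinAt f (f' x) (Ioc c b) x) :
    ∀ x ∈ Icc a b \ {c}, HasDerivWithinAt f (f' x) (Icc a b \ {c}) x := by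
  rintro x ⟨hx, hxc⟩
  rcases lt_or_gt_of_ne hxc with hlt | hgt
  · refine (hleft x ⟨hx.1, hlt⟩).mono_of_mem_nhdsWithin ?_
    filter_upwards [self_mem_nhdsWithin, nhdsWithin_le_nhds (Iio_mem_nhds hlt)] with y hy hyc
    exact ⟨hy.1.1, hyc⟩
  · refine (hright x ⟨hgt, hx.2⟩).mono_of_mem_nhdsWithin ?_
    filter_upwards [self_mem_nhdsWithin, nhdsWithin_le_nhds (Ioi_mem_nhds hgt)] with y hy hyc
    exact ⟨hyc, hy.1.2⟩

theorem theta_vanishes_general {a b c : ℝ} {p p' q θ θ' θ'' : ℝ → ℝ} {pL pR θ'L θ'R : ℝ}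
    (hp_pos : ∀ x ∈ Icc a b \ {c}, 0 < p x) (hq_nonneg : ∀ x ∈ Icc a b \ {c}, 0 ≤ q x)
    (hp : ∀ x ∈ Icc a b \ {c}, HasDerivWithinAt p (p' x) (Icc a b \ {c}) x)
    (hpL : Tendsto p (𝓝[<] c) (𝓝 pL)) (hpR : Tendsto p (𝓝[>] c) (𝓝 pR))
    (hθ_cont : ContinuousOn θ (Icc a b)) (hθa : θ a = 0) (hθb : θ b = 0)
    (hθ : ∀ x ∈ Icc a b \ {c}, HasDerivWithinAt θ (θ' x) (Icc a b \ {c}) x)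
    (hθ' : ∀ x ∈ Icc a b \ {c}, HasDerivWithinAt θ' (θ'' x) (Icc a b \ {c}) x)
    (hθ'L : Tendsto θ' (𝓝[<] c) (𝓝 θ'L)) (hθ'R : Tendsto θ' (𝓝[>] c) (𝓝 θ'R))
    (hflux : pL * θ'L = pR * θ'R)
    (hODE : ∀ x ∈ Icc a b \ {c}, -(p' x * θ' x + p x * θ'' x) + q x * θ x = 0) :
    ∀ x ∈ Icc a b, θ x = 0 := by
  have hsub : Ioo a b \ {c} ⊆ Icc a b \ {c} := sdiff_subset_sdiff_left Ioo_subset_Icc_self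
  have hnhds : ∀ x ∈ Ioo a b \ {c}, Icc a b \ {c} ∈ 𝓝 x := fun x hx =>
    mem_of_superset ((isOpen_Ioo.sdiff isClosed_singleton).mem_nhds hx) hsub
  have hflux_deriv : ∀ x ∈ Icc a b \ {c},
      HasDerivWithinAt (p * θ') (q x * θ x) (Icc a b \ {c}) x := fun x hx =>
    ((hp x hx).mul (hθ' x hx)).congr_deriv (by linear_combination -hODE x hx)
  have hflux_cont : ContinuousOn (Function.update (p * θ') c (pL * θ'L)) (Icc a b) :=
    continuousOn_update_of_tendsto_left_right
      (fun x hx => (hflux_deriv x hx).continuousWithinAt) (hpL.mul hθ'L) (hflux ▸ hpR.mul hθ'R)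
  refine eq_zero_of_hasDerivAt_flux_off_finite (finite_singleton c)
    (fun x hx => hp_pos x (hsub hx)) (fun x hx => hq_nonneg x (hsub hx)) hθ_cont hflux_cont
    (fun x hx => ?_) (fun x hx => ?_) hθa hθb
  · refine ((hθ x (hsub hx)).hasDerivAt (hnhds x hx)).congr_deriv ?_
    rw [Function.update_of_ne hx.2, Pi.mul_apply, mul_div_cancel_left₀ _ (hp_pos x (hsub hx)).ne']
  · exact ((hflux_deriv x (hsub hx)).hasDerivAt (hnhds x hx)).congr_of_eventuallyEq
      ((eventually_ne_nhds hx.2).mono fun y hy => Function.update_of_ne hy _ _)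

/-- A continuous, piecewise twice continuously differentiable solution `θ` of the
two-point boundary value problem `-(s ε0 θ')' + (s² ρ0 + s ε0 k²) θ = 0` on
`[-m,0) ∪ (0,ℓ]`, with `θ(-m) = θ(ℓ) = 0` and matching viscous flux
`s ε0⁻ θ'(0⁻) = s ε0⁺ θ'(0⁺)` at the interface, vanishes identically on `[-m,ℓ]`.
Here `θd, θdd` are the piecewise first and second derivatives of `θ`, `εd` the piecewise
derivative of `ε0`, `ε0⁻ = ε0minus` and `θ'(0⁻) = θdL`, `θ'(0⁺) = θdR` are the one-sided
limits at `0`, and `ε0⁺ = ε0 0` by right-continuity. -/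
theorem theta_vanishes (m l s k : ℝ) (ρ0 ε0 εd θ θd θdd : ℝ → ℝ)
    (ε0minus θdL θdR : ℝ)
    (hm : 0 < m) (hl : 0 < l) (hs : 0 < s) (hk : 0 ≤ k)
    -- the density profile ρ0 : piecewise continuous extensions, right-continuous at 0
    (hρ0ext : (∃ F : ℝ → ℝ, ContinuousOn F (Icc (-m) 0) ∧ EqOn ρ0 F (Ico (-m) 0)))
    (hρ0cont : ContinuousOn ρ0 (Icc 0 l))
    (hρ0pos : ∀ x ∈ Icc (-m) l, 0 < ρ0 x)
    -- the viscosity profile ε0 : piecewise C¹ with derivative εd, right-continuous at 0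
    (hε0pos : ∀ x ∈ Icc (-m) l, 0 < ε0 x)
    (hε0cont : ContinuousOn ε0 (Icc 0 l))
    (hε0d₁ : ∀ x ∈ Ico (-m) 0, HasDerivWithinAt ε0 (εd x) (Ico (-m) 0) x)
    (hε0d₂ : ∀ x ∈ Ioc 0 l, HasDerivWithinAt ε0 (εd x) (Ioc 0 l) x)
    (hε0ext : PiecewiseCont m l ε0) (hεdext : PiecewiseCont m l εd)
    (hε0minus : Tendsto ε0 (𝓝[<] 0) (𝓝 ε0minus))
    -- θ : continuous on [-m,ℓ], piecewise C², with boundary conditions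
    (hθc : ContinuousOn θ (Icc (-m) l))
    (hθbc1 : θ (-m) = 0) (hθbc2 : θ l = 0)
    (hθd₁ : ∀ x ∈ Ico (-m) 0, HasDerivWithinAt θ (θd x) (Icc (-m) 0) x)
    (hθd₂ : ∀ x ∈ Ioc 0 l, HasDerivWithinAt θ (θd x) (Icc 0 l) x)
    (hθdd₁ : ∀ x ∈ Ico (-m) 0, HasDerivWithinAt θd (θdd x) (Ico (-m) 0) x)
    (hθdd₂ : ∀ x ∈ Ioc 0 l, HasDerivWithinAt θd (θdd x) (Ioc 0 l) x)
    (hθdext : PiecewiseCont m l θd) (hθddext : PiecewiseCont m l θdd)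
    (hθdL : Tendsto θd (𝓝[<] 0) (𝓝 θdL))
    (hθdR : Tendsto θd (𝓝[>] 0) (𝓝 θdR))
    -- matching flux at the interface : s ε0⁻ θ'(0⁻) = s ε0⁺ θ'(0⁺)
    (hflux : s * ε0minus * θdL = s * ε0 0 * θdR)
    -- the ODE : -(s ε0 θ')' + (s² ρ0 + s ε0 k²) θ = 0 on [-m,0) ∪ (0,ℓ]
    (hODE : ∀ x ∈ Ico (-m) 0 ∪ Ioc 0 l,
      -(s * εd x * θd x + s * ε0 x * θdd x)
        + (s ^ 2 * ρ0 x + s * ε0 x * k ^ 2) * θ x = 0) :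
    ∀ x ∈ Icc (-m) l, θ x = 0 := by
  have hpotential : ∀ x ∈ Icc (-m) l, 0 ≤ s ^ 2 * ρ0 x + s * ε0 x * k ^ 2 := fun x hx => by
    have := hρ0pos x hx
    have := hε0pos x hx
    positivity
  have hε0plus : Tendsto ε0 (𝓝[>] 0) (𝓝 (ε0 0)) :=
    (hε0cont 0 (left_mem_Icc.2 hl.le)).mono_of_mem_nhdsWithin (Icc_mem_nhdsGT hl)
  exact theta_vanishes_general (fun x hx => mul_pos hs (hε0pos x hx.1))
    (fun x hx => hpotential x hx.1)
    (fun x hx => (hasDerivWithinAt_Icc_sdiff_singleton hε0d₁ hε0d₂ x hx).const_mul s)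
    (hε0minus.const_mul s) (hε0plus.const_mul s) hθc hθbc1 hθbc2
    (hasDerivWithinAt_Icc_sdiff_singleton (fun x hx => (hθd₁ x hx).mono Ico_subset_Icc_self)
      fun x hx => (hθd₂ x hx).mono Ioc_subset_Icc_self)
    (hasDerivWithinAt_Icc_sdiff_singleton hθdd₁ hθdd₂) hθdL hθdR hflux
    fun x hx => hODE x ((lt_or_gt_of_ne hx.2).imp (⟨hx.1.1, ·⟩) (⟨·, hx.1.2⟩))

end RT14
end
end

section
/- Let Λ > 0 and K ≥ 0. Let f : [0,∞) → ℝ be differentiable with f(t) ≥ 0 for all t ≥ 0, and let G : [0,∞) → ℝ be continuous with G(t) ≥ 0 for all t ≥ 0. Assume that for all t ≥ 0, f'(t) + G(t) ≤ K + 2Λ f(t) + 2Λ ∫₀ᵗ G(s) ds. Then for all t ≥ 0, f(t) + ∫₀ᵗ G(s) ds ≤ e^{2Λt} f(0) + (K/(2Λ))(e^{2Λt} − 1). -/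
open Set MeasureTheory intervalIntegral

/-!
The right-hand side of the inequality for `f' + G` depends on `f` and `∫ G` only through the sum
`u = f + ∫ G`, and the left-hand side is `u'`. So the integral inequality for `f` is the linear
differential inequality `u' ≤ K + c u`, which Grönwall's lemma integrates.
-/

section Gronwall

variable {a b c K δ : ℝ} {f f' G u u' : ℝ → ℝ}

theorem le_gronwallBound_of_deriv_right_le (hu : ContinuousOn u (Icc a b))
    (hu' : ∀ t ∈ Ico a b, HasDerivWithinAt u (u' t) (Ici t) t) (ha : u a ≤ δ)
    (bound : ∀ t ∈ Ico a b, u' t ≤ c * u t + K) :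
    ∀ t ∈ Icc a b, u t ≤ gronwallBound δ c K (t - a) :=
  le_gronwallBound_of_liminf_deriv_right_le hu
    (fun t ht _ hr => (hu' t ht).liminf_right_slope_le hr) ha bound

theorem hasDerivWithinAt_integral_Ici {E : Type*} [NormedAddCommGroup E] [NormedSpace ℝ E]
    [CompleteSpace E] {g : ℝ → E} (hg : IntervalIntegrable g volume a b) {t : ℝ}
    (ht : t ∈ Ico a b) (hgt : ContinuousWithinAt g (Ioi t) t) :
    HasDerivWithinAt (fun x => ∫ s in a..x, g s) (g t) (Ici t) t := by
  have hab : a ≤ b := ht.1.trans ht.2.le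
  have hg_left : IntervalIntegrable g volume a t :=
    hg.mono_set (uIcc_subset_uIcc_left (uIcc_of_le hab ▸ Ico_subset_Icc_self ht))
  have hg_meas : StronglyMeasurableAtFilter g (nhdsWithin t (Ioi t)) :=
    ⟨Ioc a b, Ioc_mem_nhdsGT_of_mem ht, hg.1.aestronglyMeasurable⟩
  exact integral_hasDerivWithinAt_right hg_left hg_meas hgt

theorem add_integral_le_gronwallBound_of_deriv_right_le (hf : ContinuousOn f (Icc a b))
    (hf' : ∀ t ∈ Ico a b, HasDerivWithinAt f (f' t) (Ici t) t)
    (hG : IntervalIntegrable G volume a b)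
    (hG_right : ∀ t ∈ Ico a b, ContinuousWithinAt G (Ioi t) t) (ha : f a ≤ δ)
    (bound : ∀ t ∈ Ico a b, f' t + G t ≤ K + c * f t + c * ∫ s in a..t, G s) :
    ∀ t ∈ Icc a b, f t + (∫ s in a..t, G s) ≤ gronwallBound δ c K (t - a) := by
  intro t ht
  have hab : a ≤ b := ht.1.trans ht.2
  have hG_primitive : ContinuousOn (fun x => ∫ s in a..x, G s) (Icc a b) :=
    uIcc_of_le hab ▸ continuousOn_primitive_interval' hG left_mem_uIcc
  exact le_gronwallBound_of_deriv_right_le (hf.add hG_primitive)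
    (fun s hs => (hf' s hs).add (hasDerivWithinAt_integral_Ici hG hs (hG_right s hs)))
    (by simpa only [Pi.add_apply, integral_same, add_zero] using ha)
    (fun s hs => (bound s hs).trans_eq (by simp only [Pi.add_apply]; ring)) t ht

theorem gronwall_growth_bound_general
    (hf : ∀ t ∈ Ici a, HasDerivWithinAt f (f' t) (Ici a) t) (hG : ContinuousOn G (Ici a))
    (bound : ∀ t ∈ Ici a, f' t + G t ≤ K + c * f t + c * ∫ s in a..t, G s) :
    ∀ t ∈ Ici a, f t + (∫ s in a..t, G s) ≤ gronwallBound (f a) c K (t - a) := fun t ht =>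
  add_integral_le_gronwallBound_of_deriv_right_le
    (fun s hs => (hf s hs.1).continuousWithinAt.mono Icc_subset_Ici_self)
    (fun s hs => (hf s hs.1).mono (Ici_subset_Ici.2 hs.1))
    ((hG.mono Icc_subset_Ici_self).intervalIntegrable_of_Icc ht)
    (fun s hs => (hG s hs.1).mono (Ioi_subset_Ici hs.1)) le_rfl
    (fun s hs => bound s hs.1) t (right_mem_Icc.2 ht)

end Gronwall

/-- The Gronwall-type differential inequality used in the growth bound for arbitrary
solutions of the linearized Rayleigh-Taylor equations. -/
theorem gronwall_growth_bound (Λ K : ℝ) (hΛ : 0 < Λ) (hK : 0 ≤ K)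
    (f f' G : ℝ → ℝ)
    (hf : ∀ t ∈ Ici (0:ℝ), HasDerivWithinAt f (f' t) (Ici 0) t)
    (hfnn : ∀ t ∈ Ici (0:ℝ), 0 ≤ f t)
    (hGc : ContinuousOn G (Ici 0))
    (hGnn : ∀ t ∈ Ici (0:ℝ), 0 ≤ G t)
    (hineq : ∀ t ∈ Ici (0:ℝ),
      f' t + G t ≤ K + 2 * Λ * f t + 2 * Λ * ∫ s in (0:ℝ)..t, G s) :
    ∀ t ∈ Ici (0:ℝ),
      f t + (∫ s in (0:ℝ)..t, G s)
        ≤ Real.exp (2 * Λ * t) * f 0 + K / (2 * Λ) * (Real.exp (2 * Λ * t) - 1) := by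
  simpa only [gronwallBound_of_K_ne_0 (mul_pos two_pos hΛ).ne', sub_zero, mul_comm (f 0)]
    using gronwall_growth_bound_general hf hGc hineq
end

section
/- Let P : ℝ → ℝ be continuously differentiable on (0,∞) with P'(r) > 0 for all r > 0, and define the enthalpy h(z) = ∫₁^z P'(r)/r dr for z > 0. Let g, c ∈ ℝ, let I ⊆ ℝ be an open interval, and let ρ : I → ℝ be continuous with ρ(x) > 0 and h(ρ(x)) = c − g x for all x ∈ I. Then for every x ∈ I, ρ is differentiable at x with ρ'(x) = −g ρ(x)/P'(ρ(x)), and the function x ↦ P(ρ(x)) is differentiable at x with derivative −g ρ(x); that is, ρ solves the hydrostatic steady-state equation d(P(ρ))/dx = −g ρ. -/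
open Set MeasureTheory intervalIntegral

/-!
By the fundamental theorem of calculus `h'(r) = P'(r) / r`. Where this does not vanish, a continuous
solution `ρ` of `h ∘ ρ = φ` inherits differentiability from `φ`, with `∇ρ = (ρ / P'(ρ)) ∇φ`, and
the chain rule turns this into hydrostatic balance, `∇(P ∘ ρ) = P'(ρ) ∇ρ = ρ ∇φ`.
A uniform gravity field is the case `φ x = c - g * x`.
-/

theorem hasDerivAt_integral_right_of_continuousOn {E : Type*} [NormedAddCommGroup E]
    [NormedSpace ℝ E] [CompleteSpace E] {f : ℝ → E} {s : Set ℝ} {a b : ℝ}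
    (hf : ContinuousOn f s) (hs : IsOpen s) (hsc : s.OrdConnected) (ha : a ∈ s) (hb : b ∈ s) :
    HasDerivAt (fun u => ∫ t in a..u, f t) (f b) b :=
  integral_hasDerivAt_right (hf.mono (hsc.uIcc_subset ha hb)).intervalIntegrable
    (hf.stronglyMeasurableAtFilter hs b hb) (hf.continuousAt (hs.mem_nhds hb))

theorem hasFDerivWithinAt_of_comp_left {𝕜 E : Type*} [NontriviallyNormedField 𝕜]
    [NormedAddCommGroup E] [NormedSpace 𝕜 E] {f : 𝕜 → 𝕜} {u w : E → 𝕜} {f' : 𝕜} {w' : E →L[𝕜] 𝕜}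
    {s : Set E} {x : E} (hu : ContinuousWithinAt u s x) (hf : HasDerivAt f f' (u x))
    (hf' : f' ≠ 0) (hw : HasFDerivWithinAt w w' s x) (hfu : EqOn (f ∘ u) w s) (hx : x ∈ s) :
    HasFDerivWithinAt u (f'⁻¹ • w') s x := by
  have hinv : Function.LeftInverse (f'⁻¹ • ContinuousLinearMap.id 𝕜 𝕜)
      (ContinuousLinearMap.toSpanSingleton 𝕜 f') := fun t => by
    simp [mul_left_comm, hf']
  simpa using hf.hasFDerivAt.hasFDerivWithinAt.of_comp_of_leftInverse
    (hu.tendsto_nhdsWithin (mapsTo_univ u s)) hw hfu.eventuallyEq_nhdsWithin hinv hx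

/-- The enthalpy `h(z) = ∫₁^z P'(r) / r dr` of the pressure law with derivative `P'`. It is
meaningful for `0 < z` only: for `z ≤ 0` the integration range reaches the singularity at `0`. -/
noncomputable def enthalpy (P' : ℝ → ℝ) (z : ℝ) : ℝ :=
  ∫ r in (1 : ℝ)..z, P' r / r

theorem hasDerivAt_enthalpy {P' : ℝ → ℝ} (hP'cont : ContinuousOn P' (Ioi 0)) {z : ℝ}
    (hz : 0 < z) : HasDerivAt (enthalpy P') (P' z / z) z :=
  hasDerivAt_integral_right_of_continuousOn (f := fun r => P' r / r)
    (hP'cont.div continuousOn_id fun _ hr => ne_of_gt hr) isOpen_Ioi ordConnected_Ioi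
    (mem_Ioi.2 one_pos) hz

section Profile

variable {E : Type*} [NormedAddCommGroup E] [NormedSpace ℝ E]
  {P P' : ℝ → ℝ} {φ ρ : E → ℝ} {s : Set E} {x : E}

theorem hasFDerivWithinAt_of_enthalpy_comp_eqOn {φ' : E →L[ℝ] ℝ}
    (hP'cont : ContinuousOn P' (Ioi 0)) (hφ : HasFDerivWithinAt φ φ' s x)
    (hρcont : ContinuousWithinAt ρ s x) (hρpos : 0 < ρ x) (hP'ne : P' (ρ x) ≠ 0)
    (hρeq : EqOn (enthalpy P' ∘ ρ) φ s) (hx : x ∈ s) :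
    HasFDerivWithinAt ρ ((ρ x / P' (ρ x)) • φ') s x := by
  simpa only [inv_div] using hasFDerivWithinAt_of_comp_left hρcont
    (hasDerivAt_enthalpy hP'cont hρpos) (div_ne_zero hP'ne hρpos.ne') hφ hρeq hx

theorem steady_state_profile_solves_hydrostatic_ODE_general {φ' : E → E →L[ℝ] ℝ}
    (hP : ∀ r : ℝ, 0 < r → HasDerivAt P (P' r) r) (hP'cont : ContinuousOn P' (Ioi 0))
    (hφ : ∀ x ∈ s, HasFDerivWithinAt φ (φ' x) s x) (hρcont : ContinuousOn ρ s)
    (hρpos : ∀ x ∈ s, 0 < ρ x) (hP'ne : ∀ x ∈ s, P' (ρ x) ≠ 0)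
    (hρeq : EqOn (enthalpy P' ∘ ρ) φ s) :
    ∀ x ∈ s, HasFDerivWithinAt ρ ((ρ x / P' (ρ x)) • φ' x) s x ∧
      HasFDerivWithinAt (P ∘ ρ) (ρ x • φ' x) s x := by
  intro x hx
  have hρ : HasFDerivWithinAt ρ ((ρ x / P' (ρ x)) • φ' x) s x :=
    hasFDerivWithinAt_of_enthalpy_comp_eqOn hP'cont (hφ x hx) (hρcont x hx) (hρpos x hx)
      (hP'ne x hx) hρeq hx
  have hPρ := (hP (ρ x) (hρpos x hx)).comp_hasFDerivWithinAt x hρ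
  rw [smul_smul, mul_div_cancel₀ _ (hP'ne x hx)] at hPρ
  exact ⟨hρ, hPρ⟩

end Profile

/-- The steady-state density profile `ρ(x) = h⁻¹(c - g x)`, where `h` is the enthalpy
associated to the pressure law `P`, solves the hydrostatic equation `d(P(ρ))/dx = -g ρ`. -/
theorem steady_state_profile_solves_hydrostatic_ODE (P P' : ℝ → ℝ)
    (hP : ∀ r : ℝ, 0 < r → HasDerivAt P (P' r) r)
    (hP'cont : ContinuousOn P' (Ioi 0))
    (hP'pos : ∀ r : ℝ, 0 < r → 0 < P' r)
    (g c : ℝ) (I : Set ℝ) (hIopen : IsOpen I) (hIconn : I.OrdConnected)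
    (ρ : ℝ → ℝ) (hρcont : ContinuousOn ρ I)
    (hρpos : ∀ x ∈ I, 0 < ρ x)
    (hρeq : ∀ x ∈ I, (∫ r in (1:ℝ)..(ρ x), P' r / r) = c - g * x) :
    ∀ x ∈ I, HasDerivAt ρ (-g * ρ x / P' (ρ x)) x ∧
      HasDerivAt (fun y => P (ρ y)) (-g * ρ x) x := by
  intro x hx
  have hφ (y : ℝ) : HasDerivAt (fun y => c - g * y) (-g) y := by
    simpa using ((hasDerivAt_id y).const_mul g).const_sub c
  obtain ⟨hρ, hPρ⟩ := steady_state_profile_solves_hydrostatic_ODE_general hP hP'cont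
    (fun y _ => (hφ y).hasFDerivAt.hasFDerivWithinAt) hρcont hρpos
    (fun y hy => (hP'pos _ (hρpos y hy)).ne') hρeq x hx
  have hI : I ∈ nhds x := hIopen.mem_nhds hx
  refine ⟨(hρ.hasFDerivAt hI).hasDerivAt.congr_deriv ?_,
    (hPρ.hasFDerivAt hI).hasDerivAt.congr_deriv ?_⟩
  · simp [mul_comm (ρ x / P' (ρ x)), mul_div_assoc, neg_div]
  · simp [mul_comm]
end
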